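/- Every stabilizer code is a CWS code: let H be an abelian subgroup of the Pauli group G_d^n with no nontrivial scalars, let Q = Fix(H) be its fixed subspace, and let K = finrank ℂ Q ≥ 1. Then there exist an abelian subgroup S of G_d^n with no nontrivial scalars satisfying H ≤ S and Nat.card S = d^n, a nonzero vector ψ ∈ Q spanning Fix(S), and elements w_1, …, w_K ∈ G_d^n such that the vectors w_1.mulVec ψ, …, w_K.mulVec ψ form a basis of Q. -/

import Mathlib

open Matrix

noncomputable def q (d : ℕ) : ℂ := Complex.exp (2 * Real.pi * Complex.I / d)

/-- Dot product of two vectors over `ZMod d`. -/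
def dotp {n d : ℕ} (A B : Fin n → ZMod d) : ZMod d := ∑ i, A i * B i

/-- The Pauli word `W(U,V)` with entries `q^{⟨U,J⟩}` at `(J, K)` when `J = K + V`. -/
noncomputable def PauliWord (d n : ℕ) (U V : Fin n → ZMod d) :
    Matrix (Fin n → ZMod d) (Fin n → ZMod d) ℂ :=
  Matrix.of fun J K => if J = K + V then q d ^ (dotp U J).val else 0

/-- The n-qudit Pauli group, as a set of matrices. -/
noncomputable def PauliSet (d n : ℕ) : Set (Matrix (Fin n → ZMod d) (Fin n → ZMod d) ℂ) :=
  {g | ∃ (k : ZMod d) (U V : Fin n → ZMod d), g = q d ^ k.val • PauliWord d n U V}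

/-- The subspace of states fixed by every matrix in `S`. -/
noncomputable def FixSubspace (d n : ℕ) [NeZero d]
    (S : Set (Matrix (Fin n → ZMod d) (Fin n → ZMod d) ℂ)) :
    Submodule ℂ ((Fin n → ZMod d) → ℂ) where
  carrier := {ψ | ∀ s ∈ S, s.mulVec ψ = ψ}
  add_mem' := by
    intro a b ha hb s hs
    simp [Matrix.mulVec_add, ha s hs, hb s hs]
  zero_mem' := by
    intro s hs
    simp [Matrix.mulVec_zero]
  smul_mem' := by
    intro c a ha s hs
    simp [Matrix.mulVec_smul, ha s hs]

/-!
The argument works for Weyl operators on functions on any finite abelian group `A`, with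
`A = (ℤ/d)ⁿ` giving the qudit case. Let `f` be a vector fixed by a Pauli group `H` and let
`f x₀ ≠ 0`. The translation parts of the elements of `H` form a group `B`, and truncating `f` to
the coset `x₀ + B` gives another vector fixed by `H`. The group `S` of all Pauli elements fixing
the truncated vector has a one-dimensional fixed space: `S` contains `H`, whose translations act
transitively on the coset, and it contains the operators `x ↦ χ (x - x₀)` for all characters `χ`
trivial on `B`, which force a fixed vector to vanish off the coset.

Pauli elements commute up to scalars, so a Pauli group fixing a nonzero vector is commutative and
contains no scalar but `1`. The non-identity elements then have trace zero, and the trace of the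
averaging projection gives `|S| = |A|`. Finally, `H` maps each Pauli image of `f` to a multiple of
itself, so averaging over `H` either kills it or shows that it is fixed by `H`. As the Pauli images
of `f` span the whole space, those fixed by `H` span the code of `H`.
-/

open Module Representation

section Invariants

variable {k G V : Type*} [Field k] [CharZero k] [Group G] [Finite G] [AddCommGroup V] [Module k V]

theorem card_mul_finrank_invariants [FiniteDimensional k V] (ρ : Representation k G V)
    (hρ : ∀ g, g ≠ 1 → LinearMap.trace k V (ρ g) = 0) :
    Nat.card G * finrank k ρ.invariants = finrank k V := by
  have := Fintype.ofFinite G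
  have hG : (Fintype.card G : k) ≠ 0 := Nat.cast_ne_zero.mpr Fintype.card_ne_zero
  have := invertibleOfNonzero hG
  have htrace : (Fintype.card G : k)⁻¹ * finrank k V = finrank k ρ.invariants := by
    rw [← ρ.isProj_averageMap.trace]
    simp only [averageMap, GroupAlgebra.average, map_smul, map_sum, asAlgebraHom_of, smul_eq_mul,
      invOf_eq_inv]
    rw [Finset.sum_eq_single_of_mem 1 (Finset.mem_univ _) fun g _ => hρ g, map_one,
      LinearMap.trace_one]
  rw [inv_mul_eq_iff_eq_mul₀ hG] at htrace
  rw [Nat.card_eq_fintype_card]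
  exact_mod_cast htrace.symm

theorem span_inter_invariants_eq_invariants (ρ : Representation k G V) {W : Set V}
    (hW : ∀ w ∈ W, ∀ g, ∃ c : k, ρ g w = c • w) (hspan : Submodule.span k W = ⊤) :
    Submodule.span k (W ∩ ρ.invariants) = ρ.invariants := by
  have := Fintype.ofFinite G
  have := invertibleOfNonzero
    (Nat.cast_ne_zero.mpr Fintype.card_ne_zero : (Fintype.card G : k) ≠ 0)
  have average_mem : ∀ w ∈ W, ρ.averageMap w ∈ Submodule.span k (W ∩ ρ.invariants) := by
    intro w hw
    choose c hc using hW w hw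
    obtain ⟨e, he⟩ : ∃ e : k, ρ.averageMap w = e • w := by
      refine ⟨⅟(Fintype.card G : k) * ∑ g, c g, ?_⟩
      simp only [averageMap, GroupAlgebra.average, map_smul, map_sum, asAlgebraHom_of,
        LinearMap.smul_apply, LinearMap.sum_apply, hc, ← Finset.sum_smul, smul_smul]
    rw [he]
    obtain rfl | he0 := eq_or_ne e 0
    · rw [zero_smul]
      exact Submodule.zero_mem _
    · have hinv : w ∈ ρ.invariants :=
        (Submodule.smul_mem_iff _ he0).mp (he ▸ ρ.averageMap_invariant w)
      exact Submodule.smul_mem _ e (Submodule.subset_span ⟨hw, hinv⟩)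
  refine le_antisymm (Submodule.span_le.mpr Set.inter_subset_right) fun v hv => ?_
  rw [← ρ.averageMap_id v hv]
  have hmap : (Submodule.span k W).map ρ.averageMap ≤ Submodule.span k (W ∩ ρ.invariants) :=
    (Submodule.map_span_le _ _ _).mpr average_mem
  exact hmap ⟨v, hspan ▸ Submodule.mem_top, rfl⟩

end Invariants

theorem ofUnits_units_eq {M : Type*} [Monoid M] [IsDedekindFiniteMonoid M] {N : Submonoid M}
    (hN : ∀ a ∈ N, ∃ b ∈ N, a * b = 1) : N.units.ofUnits = N := by
  refine le_antisymm N.ofUnits_units_le fun a ha => ?_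
  obtain ⟨b, hb, hab⟩ := hN a ha
  exact ⟨⟨a, b, hab, mul_eq_one_symm hab⟩, ⟨ha, hb⟩, rfl⟩

theorem exists_mul_eq_one_of_mem_ofUnits {M : Type*} [Monoid M] {S : Subgroup Mˣ} {a : M}
    (ha : a ∈ S.ofUnits) : ∃ b ∈ S.ofUnits, a * b = 1 := by
  obtain ⟨u, hu, rfl⟩ := ha
  exact ⟨↑u⁻¹, S.mem_ofUnits (S.inv_mem hu) rfl, u.mul_inv⟩

theorem natCard_ofUnits {M : Type*} [Monoid M] (S : Subgroup Mˣ) :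
    Nat.card S.ofUnits = Nat.card S :=
  Nat.card_congr S.ofUnitsEquivType.toEquiv

theorem exists_addChar_apply_ne_one {A : Type*} [AddCommGroup A] [Finite A] {B : AddSubgroup A}
    {a : A} (ha : a ∉ B) : ∃ χ : AddChar A ℂ, (∀ b ∈ B, χ b = 1) ∧ χ a ≠ 1 := by
  have hne : (a : A ⧸ B) ≠ 0 := by rwa [ne_eq, QuotientAddGroup.eq_zero_iff]
  obtain ⟨χ, hχ⟩ := AddChar.exists_apply_ne_zero.mpr hne
  refine ⟨χ.compAddMonoidHom (QuotientAddGroup.mk' B), fun b hb => ?_, hχ⟩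
  rw [AddChar.compAddMonoidHom_apply, QuotientAddGroup.mk'_apply,
    (QuotientAddGroup.eq_zero_iff b).mpr hb, AddChar.map_zero_eq_one]

section Weyl

variable {A : Type*} [AddCommGroup A] [DecidableEq A]

/-- The Weyl operator `f ↦ (x ↦ χ x * f (x - a))` of a finite abelian group: translation by `a`
followed by multiplication by the character `χ`. -/
def weyl (χ : AddChar A ℂ) (a : A) : Matrix A A ℂ :=
  Matrix.of fun x y => if x = y + a then χ x else 0

theorem weyl_zero_zero : weyl (0 : AddChar A ℂ) 0 = 1 := by
  ext x y
  simp [weyl, Matrix.one_apply]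

variable [Fintype A]

theorem weyl_mulVec_apply (χ : AddChar A ℂ) (a : A) (f : A → ℂ) (x : A) :
    (weyl χ a *ᵥ f) x = χ x * f (x - a) := by
  simp only [weyl, mulVec, dotProduct, Matrix.of_apply, ← sub_eq_iff_eq_add, ite_mul, zero_mul,
    Finset.sum_ite_eq, Finset.mem_univ, if_true]

theorem weyl_mul_weyl (χ χ' : AddChar A ℂ) (a a' : A) :
    weyl χ a * weyl χ' a' = χ' (-a) • weyl (χ + χ') (a + a') := by
  refine Matrix.ext_iff_mulVec.mpr fun f => funext fun x => ?_
  rw [← mulVec_mulVec, smul_mulVec, Pi.smul_apply, weyl_mulVec_apply, weyl_mulVec_apply,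
    weyl_mulVec_apply, AddChar.add_apply, sub_sub, sub_eq_add_neg x, AddChar.map_add_eq_mul,
    smul_eq_mul]
  ring

theorem weyl_mul_weyl_comm (χ χ' : AddChar A ℂ) (a a' : A) :
    weyl χ a * weyl χ' a' = (χ' (-a) * χ a') • (weyl χ' a' * weyl χ a) := by
  rw [weyl_mul_weyl, weyl_mul_weyl, smul_smul, mul_assoc, ← AddChar.map_add_eq_mul,
    add_neg_cancel, AddChar.map_zero_eq_one, mul_one, add_comm χ, add_comm a]

theorem smul_weyl_mul_smul_weyl_neg {c : ℂ} (hc : c ≠ 0) (χ : AddChar A ℂ) (a : A) :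
    (c • weyl χ a) * ((c⁻¹ * χ (-a)) • weyl (-χ) (-a)) = 1 := by
  rw [smul_mul_smul_comm, weyl_mul_weyl, smul_smul, AddChar.neg_apply, neg_neg,
    mul_inv_cancel_left₀ hc, ← AddChar.map_add_eq_mul, neg_add_cancel, AddChar.map_zero_eq_one,
    one_smul, add_neg_cancel, add_neg_cancel, weyl_zero_zero]

theorem eq_zero_of_trace_weyl_ne_zero {χ : AddChar A ℂ} {a : A} (h : (weyl χ a).trace ≠ 0) :
    χ = 0 ∧ a = 0 := by
  have ha : a = 0 := by
    by_contra ha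
    exact h (Finset.sum_eq_zero fun x _ => by simp [weyl, ha])
  subst ha
  refine ⟨AddChar.sum_ne_zero_iff_eq_zero.mp ?_, rfl⟩
  simpa [Matrix.trace, weyl] using h

theorem span_range_weyl_mulVec {f : A → ℂ} (hf : f ≠ 0) :
    Submodule.span ℂ (Set.range fun p : AddChar A ℂ × A => weyl p.1 p.2 *ᵥ f) = ⊤ := by
  set W := Submodule.span ℂ (Set.range fun p : AddChar A ℂ × A => weyl p.1 p.2 *ᵥ f)
  obtain ⟨y, hy⟩ := Function.ne_iff.mp hf
  rw [eq_top_iff, ← (Pi.basisFun ℂ A).span_eq, Submodule.span_le]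
  rintro _ ⟨x, rfl⟩
  have orthogonality : ∑ χ : AddChar A ℂ, χ (-x) • (weyl χ (x - y) *ᵥ f) =
      (Fintype.card A * f y) • Pi.basisFun ℂ A x := by
    ext z
    simp only [Finset.sum_apply, Pi.smul_apply, weyl_mulVec_apply, smul_eq_mul, ← mul_assoc,
      ← AddChar.map_add_eq_mul, ← Finset.sum_mul, AddChar.sum_apply_eq_ite, neg_add_eq_zero,
      Pi.basisFun_apply, Pi.single_apply]
    obtain rfl | hxz := eq_or_ne x z
    · simp
    · simp [hxz, hxz.symm]
  have hmem : (Fintype.card A * f y) • Pi.basisFun ℂ A x ∈ W := orthogonality ▸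
    Submodule.sum_mem _ fun χ _ => Submodule.smul_mem _ _ (Submodule.subset_span ⟨(χ, x - y), rfl⟩)
  exact (Submodule.smul_mem_iff _ (mul_ne_zero (Nat.cast_ne_zero.mpr Fintype.card_ne_zero) hy)).mp
    hmem

end Weyl

section PauliGroup

theorem addChar_pow_exponent {A : Type*} [AddCommGroup A] (χ : AddChar A ℂ) (a : A) :
    χ a ^ AddMonoid.exponent A = 1 := by
  rw [← AddChar.map_nsmul_eq_pow, AddMonoid.exponent_nsmul_eq_zero, AddChar.map_zero_eq_one]

theorem ne_zero_of_pow_exponent_eq_one {A : Type*} [AddCommGroup A] [Finite A] {c : ℂ}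
    (hc : c ^ AddMonoid.exponent A = 1) : c ≠ 0 :=
  left_ne_zero_of_mul_eq_one ((mul_pow_sub_one (NeZero.ne _) c).trans hc)

variable {A : Type*} [AddCommGroup A] [Fintype A] [DecidableEq A]

variable (A) in
/-- The Weyl operators of `A` with phases in the roots of unity of order dividing the exponent of
`A`, which are the phases produced by multiplying Weyl operators. For `A = (ℤ/d)ⁿ` this is the
`n`-qudit Pauli group. -/
def pauliSubmonoid : Submonoid (Matrix A A ℂ) where
  carrier := {g | ∃ c : ℂ, c ^ AddMonoid.exponent A = 1 ∧ ∃ χ a, g = c • weyl χ a}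
  one_mem' := ⟨1, one_pow _, 0, 0, by rw [one_smul, weyl_zero_zero]⟩
  mul_mem' := by
    rintro _ _ ⟨c, hc, χ, a, rfl⟩ ⟨c', hc', χ', a', rfl⟩
    refine ⟨c * c' * χ' (-a), ?_, χ + χ', a + a', ?_⟩
    · rw [mul_pow, mul_pow, hc, hc', addChar_pow_exponent, one_mul, one_mul]
    · rw [smul_mul_smul_comm, weyl_mul_weyl, smul_smul]

variable (A) in
/-- The Pauli group of `A` as a group of invertible matrices. -/
def pauliGroup : Subgroup (GL A ℂ) := (pauliSubmonoid A).units

theorem ofUnits_pauliGroup : (pauliGroup A).ofUnits = pauliSubmonoid A := by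
  refine ofUnits_units_eq ?_
  rintro _ ⟨c, hc, χ, a, rfl⟩
  refine ⟨_, ⟨c⁻¹ * χ (-a), ?_, -χ, -a, rfl⟩,
    smul_weyl_mul_smul_weyl_neg (ne_zero_of_pow_exponent_eq_one hc) χ a⟩
  rw [mul_pow, inv_pow, hc, inv_one, one_mul, addChar_pow_exponent]

theorem exists_mem_pauliGroup {c : ℂ} (hc : c ^ AddMonoid.exponent A = 1) (χ : AddChar A ℂ)
    (a : A) : ∃ u ∈ pauliGroup A, (u : Matrix A A ℂ) = c • weyl χ a := by
  rw [← Subgroup.mem_ofUnits_iff, ofUnits_pauliGroup]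
  exact ⟨c, hc, χ, a, rfl⟩

theorem exists_eq_smul_weyl {u : GL A ℂ} (hu : u ∈ pauliGroup A) :
    ∃ c : ℂ, c ≠ 0 ∧ ∃ χ a, (u : Matrix A A ℂ) = c • weyl χ a := by
  obtain ⟨c, hc, h⟩ := Submonoid.val_mem_of_mem_units _ hu
  exact ⟨c, ne_zero_of_pow_exponent_eq_one hc, h⟩

instance : Finite (pauliGroup A) := by
  have : Finite (pauliSubmonoid A) := by
    refine ((Set.finite_range fun p : rootsOfUnity (AddMonoid.exponent A) ℂ × AddChar A ℂ × A =>
      ((p.1 : ℂˣ) : ℂ) • weyl p.2.1 p.2.2).subset ?_).to_subtype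
    rintro _ ⟨c, hc, χ, a, rfl⟩
    exact ⟨(rootsOfUnity.mkOfPowEq c hc, χ, a), rfl⟩
  exact Finite.of_equiv _ (pauliSubmonoid A).unitsEquivUnitsType.symm.toEquiv

theorem exists_mul_eq_smul_mul {u v : GL A ℂ} (hu : u ∈ pauliGroup A) (hv : v ∈ pauliGroup A) :
    ∃ c : ℂ, (u * v : Matrix A A ℂ) = c • (v * u : Matrix A A ℂ) := by
  obtain ⟨c, -, χ, a, hu⟩ := exists_eq_smul_weyl hu
  obtain ⟨c', -, χ', a', hv⟩ := exists_eq_smul_weyl hv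
  refine ⟨χ' (-a) * χ a', ?_⟩
  rw [hu, hv, smul_mul_smul_comm, smul_mul_smul_comm, weyl_mul_weyl_comm, smul_comm, mul_comm c']

end PauliGroup

section CodeSpace

variable {ι R : Type*} [Fintype ι] [DecidableEq ι] [CommRing R]

/-- The subspace of vectors fixed by a set `S` of matrices. -/
def fixedSubspace (S : Set (Matrix ι ι R)) : Submodule R (ι → R) where
  carrier := {f | ∀ s ∈ S, s *ᵥ f = f}
  add_mem' ha hb s hs := by rw [mulVec_add, ha s hs, hb s hs]
  zero_mem' _ _ := mulVec_zero _
  smul_mem' c _ ha s hs := by rw [mulVec_smul, ha s hs]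

/-- The stabilizer code of a group `S` of invertible matrices: the vectors fixed by `S`, as the
invariants of the natural representation of `S`. -/
noncomputable def codeSpace (S : Subgroup (GL ι R)) : Submodule R (ι → R) :=
  (ofDistribMulAction R S (ι → R)).invariants

theorem mem_codeSpace {S : Subgroup (GL ι R)} {f : ι → R} :
    f ∈ codeSpace S ↔ ∀ u ∈ S, (u : Matrix ι ι R) *ᵥ f = f :=
  Subtype.forall

theorem fixedSubspace_ofUnits (S : Subgroup (GL ι R)) : fixedSubspace S.ofUnits = codeSpace S := by
  ext f
  rw [mem_codeSpace]
  exact ⟨fun h u hu => h _ (S.mem_ofUnits hu rfl), by rintro h _ ⟨u, hu, rfl⟩; exact h u hu⟩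

theorem eq_one_of_smul_one_mulVec_eq [IsDomain R] {c : R} {f : ι → R} (hf : f ≠ 0)
    (h : (c • (1 : Matrix ι ι R)) *ᵥ f = f) : c = 1 := by
  rw [smul_mulVec, one_mulVec] at h
  exact smul_left_injective R hf (h.trans (one_smul R f).symm)

end CodeSpace

section PauliCode

variable {A : Type*} [AddCommGroup A] [Fintype A] [DecidableEq A] {S : Subgroup (GL A ℂ)}

theorem mul_comm_of_mem_of_codeSpace_ne_bot (hS : S ≤ pauliGroup A) (hne : codeSpace S ≠ ⊥)
    {u v : GL A ℂ} (hu : u ∈ S) (hv : v ∈ S) : u * v = v * u := by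
  obtain ⟨f, hf, hf0⟩ := Submodule.exists_mem_ne_zero_of_ne_bot hne
  obtain ⟨c, hc⟩ := exists_mul_eq_smul_mul (hS hu) (hS hv)
  have hfix : (c • (1 : Matrix A A ℂ)) *ᵥ f = f := by
    calc (c • (1 : Matrix A A ℂ)) *ᵥ f = c • ((v * u : GL A ℂ) : Matrix A A ℂ) *ᵥ f := by
          rw [smul_mulVec, one_mulVec, mem_codeSpace.mp hf _ (S.mul_mem hv hu)]
      _ = ((u * v : GL A ℂ) : Matrix A A ℂ) *ᵥ f := by
          rw [Units.val_mul, Units.val_mul, hc, smul_mulVec]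
      _ = f := mem_codeSpace.mp hf _ (S.mul_mem hu hv)
  rw [eq_one_of_smul_one_mulVec_eq hf0 hfix, one_smul] at hc
  exact Units.ext hc

theorem natCard_mul_finrank_codeSpace (hS : S ≤ pauliGroup A) (hne : codeSpace S ≠ ⊥) :
    Nat.card S * finrank ℂ (codeSpace S) = Fintype.card A := by
  obtain ⟨f, hf, hf0⟩ := Submodule.exists_mem_ne_zero_of_ne_bot hne
  have := Finite.of_injective _ (Subgroup.inclusion_injective hS)
  refine (card_mul_finrank_invariants _ fun u hu => ?_).trans (finrank_fintype_fun_eq_card ℂ)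
  change LinearMap.trace ℂ _ (toLin' ((u : GL A ℂ) : Matrix A A ℂ)) = 0
  rw [trace_toLin'_eq]
  by_contra! htrace
  obtain ⟨c, -, χ, a, hw⟩ := exists_eq_smul_weyl (hS u.2)
  rw [hw, trace_smul, smul_ne_zero_iff] at htrace
  obtain ⟨rfl, rfl⟩ := eq_zero_of_trace_weyl_ne_zero htrace.2
  rw [weyl_zero_zero] at hw
  have hc : c = 1 := eq_one_of_smul_one_mulVec_eq hf0 (hw ▸ mem_codeSpace.mp hf _ u.2)
  exact hu (Subtype.ext (Units.ext (by simpa [hc] using hw)))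

theorem exists_pauli_basis_codeSpace (hS : S ≤ pauliGroup A) {f : A → ℂ} (hf : f ∈ codeSpace S)
    (hf0 : f ≠ 0) : ∃ w : Fin (finrank ℂ (codeSpace S)) → Matrix A A ℂ,
      (∀ i, w i ∈ pauliSubmonoid A) ∧ LinearIndependent ℂ (fun i => w i *ᵥ f) ∧
      Submodule.span ℂ (Set.range fun i => w i *ᵥ f) = codeSpace S := by
  have := Finite.of_injective _ (Subgroup.inclusion_injective hS)
  let W : Set (A → ℂ) := Set.range fun u : pauliGroup A => ((u : GL A ℂ) : Matrix A A ℂ) *ᵥ f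
  have eigenvectors : ∀ w ∈ W, ∀ s : S, ∃ c : ℂ, ((s : GL A ℂ) : Matrix A A ℂ) *ᵥ w = c • w := by
    rintro _ ⟨u, rfl⟩ s
    obtain ⟨c, hc⟩ := exists_mul_eq_smul_mul (hS s.2) u.2
    exact ⟨c, by rw [mulVec_mulVec, hc, smul_mulVec, ← mulVec_mulVec,
      mem_codeSpace.mp hf s s.2]⟩
  have hspan : Submodule.span ℂ W = ⊤ := by
    refine top_le_iff.mp ((span_range_weyl_mulVec hf0).ge.trans (Submodule.span_mono ?_))
    rintro _ ⟨⟨χ, a⟩, rfl⟩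
    obtain ⟨u, hu, huw⟩ := exists_mem_pauliGroup (one_pow _) χ a
    exact ⟨⟨u, hu⟩, by simp only [huw, one_smul]⟩
  have hspan_fixed : Submodule.span ℂ (W ∩ (codeSpace S : Set (A → ℂ))) = codeSpace S :=
    span_inter_invariants_eq_invariants _ eigenvectors hspan
  have hbasis := Submodule.exists_fun_fin_finrank_span_eq ℂ (W ∩ (codeSpace S : Set (A → ℂ)))
  rw [hspan_fixed] at hbasis
  obtain ⟨b, hbW, hbspan, hb⟩ := hbasis
  choose u hu using fun i => (hbW i).1
  refine ⟨fun i => (u i : GL A ℂ), fun i => Submonoid.val_mem_of_mem_units _ (u i).2, ?_⟩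
  simp only [hu]
  exact ⟨hb, hbspan⟩

end PauliCode

section StateStabilizer

variable {A : Type*} [AddCommGroup A] [Fintype A] [DecidableEq A]

/-- The stabilizer group of a state `f`: the elements of the Pauli group fixing `f`. -/
def stateStabilizer (f : A → ℂ) : Subgroup (GL A ℂ) :=
  pauliGroup A ⊓ MulAction.stabilizer (GL A ℂ) f

/-- The group of translation parts of the Weyl operators proportional to elements of `S`. -/
def shiftSubgroup (S : Subgroup (GL A ℂ)) : AddSubgroup A where
  carrier := {a | ∃ u ∈ S, ∃ c : ℂ, c ≠ 0 ∧ ∃ χ, (u : Matrix A A ℂ) = c • weyl χ a}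
  zero_mem' := ⟨1, S.one_mem, 1, one_ne_zero, 0, by rw [weyl_zero_zero, one_smul, Units.val_one]⟩
  add_mem' := by
    rintro a a' ⟨u, hu, c, hc, χ, huw⟩ ⟨u', hu', c', hc', χ', huw'⟩
    refine ⟨u * u', S.mul_mem hu hu', c * c' * χ' (-a),
      mul_ne_zero (mul_ne_zero hc hc') (χ'.val_isUnit _).ne_zero, χ + χ', ?_⟩
    rw [Units.val_mul, huw, huw', smul_mul_smul_comm, weyl_mul_weyl, smul_smul]
  neg_mem' := by
    rintro a ⟨u, hu, c, hc, χ, huw⟩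
    have hc_neg : c⁻¹ * χ (-a) ≠ 0 := mul_ne_zero (inv_ne_zero hc) (χ.val_isUnit _).ne_zero
    refine ⟨u⁻¹, S.inv_mem hu, _, hc_neg, -χ, Units.inv_eq_of_mul_eq_one_right ?_⟩
    rw [huw, smul_weyl_mul_smul_weyl_neg hc]

theorem indicator_mem_codeSpace {S : Subgroup (GL A ℂ)} (hS : S ≤ pauliGroup A) {C : Set A}
    (hC : ∀ a ∈ shiftSubgroup S, ∀ x, x - a ∈ C ↔ x ∈ C) {f : A → ℂ} (hf : f ∈ codeSpace S) :
    C.indicator f ∈ codeSpace S := by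
  refine mem_codeSpace.mpr fun u hu => funext fun x => ?_
  obtain ⟨c, hc, χ, a, huw⟩ := exists_eq_smul_weyl (hS hu)
  have hxa : x - a ∈ C ↔ x ∈ C := hC a ⟨u, hu, c, hc, χ, huw⟩ x
  have hfx := congrFun (mem_codeSpace.mp hf u hu) x
  rw [huw, smul_mulVec, Pi.smul_apply, weyl_mulVec_apply] at hfx ⊢
  by_cases hx : x ∈ C
  · rwa [Set.indicator_of_mem (hxa.mpr hx), Set.indicator_of_mem hx]
  · rw [Set.indicator_of_notMem (mt hxa.mp hx), Set.indicator_of_notMem hx, mul_zero, smul_zero]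

theorem apply_eq_zero_of_sub_mem_shiftSubgroup {S : Subgroup (GL A ℂ)} {f : A → ℂ}
    (hf : f ∈ codeSpace S) {x x₀ : A} (hx₀ : f x₀ = 0) (hx : x - x₀ ∈ shiftSubgroup S) :
    f x = 0 := by
  obtain ⟨u, hu, c, -, χ, huw⟩ := hx
  rw [← mem_codeSpace.mp hf u hu, huw, smul_mulVec, Pi.smul_apply, weyl_mulVec_apply,
    sub_sub_cancel, hx₀, mul_zero, smul_zero]

theorem apply_eq_zero_of_sub_notMem {f g : A → ℂ} {B : AddSubgroup A} {x x₀ : A}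
    (hf : ∀ y, y - x₀ ∉ B → f y = 0) (hg : g ∈ codeSpace (stateStabilizer f))
    (hx : x - x₀ ∉ B) : g x = 0 := by
  obtain ⟨χ, hχB, hχx⟩ := exists_addChar_apply_ne_one hx
  obtain ⟨u, hu, huw⟩ := exists_mem_pauliGroup (addChar_pow_exponent χ (-x₀)) χ 0
  have mulVec_u (h : A → ℂ) (y : A) : ((u : Matrix A A ℂ) *ᵥ h) y = χ (y - x₀) * h y := by
    rw [huw, smul_mulVec, Pi.smul_apply, weyl_mulVec_apply, sub_zero, smul_eq_mul, ← mul_assoc,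
      ← AddChar.map_add_eq_mul, neg_add_eq_sub]
  have hu_mem : u ∈ stateStabilizer f := by
    refine ⟨hu, funext fun y => (mulVec_u f y).trans ?_⟩
    by_cases hy : y - x₀ ∈ B
    · rw [hχB _ hy, one_mul]
    · rw [hf y hy, mul_zero]
  have hgx : χ (x - x₀) * g x = g x := by rw [← mulVec_u, mem_codeSpace.mp hg u hu_mem]
  exact (mul_left_eq_self₀.mp hgx).resolve_left hχx

theorem codeSpace_stateStabilizer_eq_span_singleton {S : Subgroup (GL A ℂ)}
    (hS : S ≤ pauliGroup A) {f : A → ℂ} (hf : f ∈ codeSpace S) {x₀ : A} (hx₀ : f x₀ ≠ 0)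
    (hf_off : ∀ y, y - x₀ ∉ shiftSubgroup S → f y = 0) :
    codeSpace (stateStabilizer f) = Submodule.span ℂ {f} := by
  have hf_mem : f ∈ codeSpace (stateStabilizer f) := mem_codeSpace.mpr fun _ hu => hu.2
  have hle : codeSpace (stateStabilizer f) ≤ codeSpace S := fun g hg =>
    mem_codeSpace.mpr fun u hu => mem_codeSpace.mp hg u ⟨hS hu, mem_codeSpace.mp hf u hu⟩
  have eq_zero : ∀ g ∈ codeSpace (stateStabilizer f), g x₀ = 0 → g = 0 := by
    intro g hg hgx₀
    funext x
    by_cases hx : x - x₀ ∈ shiftSubgroup S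
    · exact apply_eq_zero_of_sub_mem_shiftSubgroup (hle hg) hgx₀ hx
    · exact apply_eq_zero_of_sub_notMem hf_off hg hx
  refine le_antisymm (fun g hg => ?_) ((Submodule.span_singleton_le_iff_mem _ _).mpr hf_mem)
  refine Submodule.mem_span_singleton.mpr ⟨g x₀ / f x₀, (sub_eq_zero.mp ?_).symm⟩
  refine eq_zero _ (sub_mem hg (Submodule.smul_mem _ _ hf_mem)) ?_
  rw [Pi.sub_apply, Pi.smul_apply, smul_eq_mul, div_mul_cancel₀ _ hx₀, sub_self]

theorem exists_codeSpace_stateStabilizer_eq_span_singleton {S : Subgroup (GL A ℂ)}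
    (hS : S ≤ pauliGroup A) (hne : codeSpace S ≠ ⊥) :
    ∃ f ∈ codeSpace S, f ≠ 0 ∧ codeSpace (stateStabilizer f) = Submodule.span ℂ {f} := by
  obtain ⟨f₀, hf₀, hf₀_ne⟩ := Submodule.exists_mem_ne_zero_of_ne_bot hne
  obtain ⟨x₀, hx₀⟩ := Function.ne_iff.mp hf₀_ne
  let C : Set A := (· - x₀) ⁻¹' shiftSubgroup S
  have hC : ∀ a ∈ shiftSubgroup S, ∀ x, x - a ∈ C ↔ x ∈ C := by
    intro a ha x
    change x - a - x₀ ∈ shiftSubgroup S ↔ x - x₀ ∈ shiftSubgroup S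
    rw [sub_right_comm, sub_eq_add_neg (x - x₀), AddSubgroup.add_mem_cancel_right _ (neg_mem ha)]
  have hx₀C : x₀ ∈ C := by
    rw [Set.mem_preimage, sub_self]
    exact zero_mem _
  have hf : C.indicator f₀ ∈ codeSpace S := indicator_mem_codeSpace hS hC hf₀
  have hfx₀ : C.indicator f₀ x₀ ≠ 0 := by rwa [Set.indicator_of_mem hx₀C]
  have hf_off : ∀ y, y - x₀ ∉ shiftSubgroup S → C.indicator f₀ y = 0 :=
    fun y hy => Set.indicator_of_notMem (s := C) hy f₀
  exact ⟨C.indicator f₀, hf, fun h => hfx₀ (congrFun h x₀),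
    codeSpace_stateStabilizer_eq_span_singleton hS hf hfx₀ hf_off⟩

end StateStabilizer

section Qudits

theorem exponent_pi_zmod (ι : Type*) [Finite ι] [Nonempty ι] (d : ℕ) :
    AddMonoid.exponent (ι → ZMod d) = d := by
  have := Fintype.ofFinite ι
  rw [AddMonoid.exponent_pi, ZMod.exponent]
  exact Nat.dvd_antisymm (Finset.lcm_dvd fun _ _ => dvd_rfl)
    (Finset.dvd_lcm (Finset.mem_univ (Classical.arbitrary ι)))

variable {d : ℕ} [NeZero d]

theorem q_pow_val (a : ZMod d) : q d ^ a.val = ZMod.stdAddChar a := by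
  rw [ZMod.stdAddChar_apply, ZMod.toCircle_apply, q, ← Complex.exp_nat_mul]
  congr 1
  ring

theorem pow_eq_one_iff_exists_q_pow {c : ℂ} : c ^ d = 1 ↔ ∃ k : ZMod d, c = q d ^ k.val := by
  have hq : IsPrimitiveRoot (q d) d := Complex.isPrimitiveRoot_exp d (NeZero.ne d)
  constructor
  · intro hc
    obtain ⟨i, hi, rfl⟩ := hq.eq_pow_of_pow_eq_one hc
    exact ⟨i, by rw [ZMod.val_cast_of_lt hi]⟩
  · rintro ⟨k, rfl⟩
    rw [← pow_mul, mul_comm, pow_mul, hq.pow_eq_one, one_pow]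

/-- The character `x ↦ q ^ ⟨U, x⟩` of `(ℤ/d)ⁿ`. -/
noncomputable def dotChar {n : ℕ} (U : Fin n → ZMod d) : AddChar (Fin n → ZMod d) ℂ :=
  ZMod.stdAddChar.compAddMonoidHom (dotProductBilin (ZMod d) (ZMod d) U).toAddMonoidHom

theorem dotChar_apply {n : ℕ} (U x : Fin n → ZMod d) : dotChar U x = q d ^ (dotp U x).val :=
  (q_pow_val _).symm

theorem dotChar_surjective (d n : ℕ) [NeZero d] :
    Function.Surjective (dotChar : (Fin n → ZMod d) → AddChar (Fin n → ZMod d) ℂ) := by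
  have hinj : Function.Injective (dotChar : (Fin n → ZMod d) → AddChar (Fin n → ZMod d) ℂ) := by
    intro U V hUV
    funext i
    simpa [dotChar, ZMod.injective_stdAddChar.eq_iff] using DFunLike.congr_fun hUV (Pi.single i 1)
  exact ((Fintype.bijective_iff_injective_and_card _).mpr ⟨hinj, AddChar.card_eq.symm⟩).2

theorem pauliWord_eq_weyl {n : ℕ} (U V : Fin n → ZMod d) :
    PauliWord d n U V = weyl (dotChar U) V := by
  ext x y
  simp only [PauliWord, weyl, Matrix.of_apply, dotChar_apply]

theorem pauliSet_eq_pauliSubmonoid {n : ℕ} [NeZero n] :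
    PauliSet d n = pauliSubmonoid (Fin n → ZMod d) := by
  ext g
  constructor
  · rintro ⟨k, U, V, rfl⟩
    refine ⟨_, ?_, dotChar U, V, by rw [pauliWord_eq_weyl]⟩
    rw [exponent_pi_zmod]
    exact pow_eq_one_iff_exists_q_pow.mpr ⟨k, rfl⟩
  · rintro ⟨c, hc, χ, V, rfl⟩
    obtain ⟨U, rfl⟩ := dotChar_surjective d n χ
    obtain ⟨k, rfl⟩ := pow_eq_one_iff_exists_q_pow.mp ((exponent_pi_zmod (Fin n) d) ▸ hc)
    exact ⟨k, U, V, by rw [pauliWord_eq_weyl]⟩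

end Qudits

theorem stabilizer_is_cws_general {A : Type*} [AddCommGroup A] [Fintype A] [DecidableEq A]
    {H : Set (Matrix A A ℂ)} (hHsub : H ⊆ pauliSubmonoid A) (hH1 : 1 ∈ H)
    (hHmul : ∀ a ∈ H, ∀ b ∈ H, a * b ∈ H) (hHinv : ∀ a ∈ H, ∃ b ∈ H, a * b = 1)
    (hne : fixedSubspace H ≠ ⊥) :
    ∃ S : Set (Matrix A A ℂ), S ⊆ pauliSubmonoid A ∧ 1 ∈ S ∧
      (∀ a ∈ S, ∀ b ∈ S, a * b ∈ S) ∧ (∀ a ∈ S, ∃ b ∈ S, a * b = 1) ∧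
      (∀ a ∈ S, ∀ b ∈ S, a * b = b * a) ∧
      (∀ c : ℂ, c • (1 : Matrix A A ℂ) ∈ S → c • (1 : Matrix A A ℂ) = 1) ∧
      H ⊆ S ∧ Nat.card S = Fintype.card A ∧
      ∃ f ∈ fixedSubspace H, f ≠ 0 ∧ fixedSubspace S = Submodule.span ℂ {f} ∧
        ∃ w : Fin (finrank ℂ (fixedSubspace H)) → Matrix A A ℂ,
          (∀ i, w i ∈ pauliSubmonoid A) ∧ LinearIndependent ℂ (fun i => w i *ᵥ f) ∧
          Submodule.span ℂ (Set.range fun i => w i *ᵥ f) = fixedSubspace H := by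
  obtain ⟨N, hN, rfl⟩ : ∃ N ≤ pauliGroup A, (N.ofUnits : Set _) = H := by
    let M : Submonoid (Matrix A A ℂ) := ⟨⟨H, fun ha hb => hHmul _ ha _ hb⟩, hH1⟩
    exact ⟨M.units, Submonoid.units_mono hHsub, congrArg _ (ofUnits_units_eq (N := M) hHinv)⟩
  rw [fixedSubspace_ofUnits] at hne ⊢
  obtain ⟨f, hf, hf0, hline⟩ := exists_codeSpace_stateStabilizer_eq_span_singleton hN hne
  have hS : stateStabilizer f ≤ pauliGroup A := inf_le_left
  have hSne : codeSpace (stateStabilizer f) ≠ ⊥ := by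
    rwa [hline, ne_eq, Submodule.span_singleton_eq_bot]
  have hcard := natCard_mul_finrank_codeSpace hS hSne
  rw [hline, finrank_span_singleton hf0, mul_one, ← natCard_ofUnits] at hcard
  refine ⟨(stateStabilizer f).ofUnits, ?_, one_mem _, fun _ ha _ hb => mul_mem ha hb,
    fun _ => exists_mul_eq_one_of_mem_ofUnits, ?_, ?_, ?_, hcard, f, hf, hf0,
    (fixedSubspace_ofUnits _).trans hline, exists_pauli_basis_codeSpace hN hf hf0⟩
  · rw [← ofUnits_pauliGroup]
    exact Subgroup.ofUnits_mono hS
  · rintro _ ⟨u, hu, rfl⟩ _ ⟨v, hv, rfl⟩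
    exact congrArg Units.val (mul_comm_of_mem_of_codeSpace_ne_bot hS hSne hu hv)
  · rintro c ⟨u, hu, hc⟩
    have hfix : (c • (1 : Matrix A A ℂ)) *ᵥ f = f := hc ▸ (hu.2 : u • f = f)
    rw [eq_one_of_smul_one_mulVec_eq hf0 hfix, one_smul]
  · exact Subgroup.ofUnits_mono fun u hu => ⟨hN hu, mem_codeSpace.mp hf u hu⟩

theorem stabilizer_is_cws (d n : ℕ) [NeZero d] (hd : 2 ≤ d) (hn : 1 ≤ n)
    (H : Set (Matrix (Fin n → ZMod d) (Fin n → ZMod d) ℂ))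
    (hHsub : H ⊆ PauliSet d n)
    (hH1 : (1 : Matrix (Fin n → ZMod d) (Fin n → ZMod d) ℂ) ∈ H)
    (hHmul : ∀ a ∈ H, ∀ b ∈ H, a * b ∈ H)
    (hHinv : ∀ a ∈ H, ∃ b ∈ H, a * b = 1)
    (hHcomm : ∀ a ∈ H, ∀ b ∈ H, a * b = b * a)
    (hHscal : ∀ c : ℂ, c • (1 : Matrix (Fin n → ZMod d) (Fin n → ZMod d) ℂ) ∈ H →
      c • (1 : Matrix (Fin n → ZMod d) (Fin n → ZMod d) ℂ) = 1)
    (hK : 1 ≤ Module.finrank ℂ (FixSubspace d n H)) :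
    ∃ S : Set (Matrix (Fin n → ZMod d) (Fin n → ZMod d) ℂ),
      S ⊆ PauliSet d n ∧
      (1 : Matrix (Fin n → ZMod d) (Fin n → ZMod d) ℂ) ∈ S ∧
      (∀ a ∈ S, ∀ b ∈ S, a * b ∈ S) ∧
      (∀ a ∈ S, ∃ b ∈ S, a * b = 1) ∧
      (∀ a ∈ S, ∀ b ∈ S, a * b = b * a) ∧
      (∀ c : ℂ, c • (1 : Matrix (Fin n → ZMod d) (Fin n → ZMod d) ℂ) ∈ S →
        c • (1 : Matrix (Fin n → ZMod d) (Fin n → ZMod d) ℂ) = 1) ∧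
      H ⊆ S ∧ Nat.card S = d ^ n ∧
      ∃ ψ ∈ FixSubspace d n H, ψ ≠ 0 ∧
        FixSubspace d n S = Submodule.span ℂ {ψ} ∧
        ∃ w : Fin (Module.finrank ℂ (FixSubspace d n H)) →
            Matrix (Fin n → ZMod d) (Fin n → ZMod d) ℂ,
          (∀ i, w i ∈ PauliSet d n) ∧
          LinearIndependent ℂ (fun i => (w i).mulVec ψ) ∧
          Submodule.span ℂ (Set.range fun i => (w i).mulVec ψ) =
            FixSubspace d n H := by
  have : NeZero n := ⟨Nat.one_le_iff_ne_zero.mp hn⟩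
  have hcard : Fintype.card (Fin n → ZMod d) = d ^ n := by simp
  rw [pauliSet_eq_pauliSubmonoid] at hHsub ⊢
  rw [← hcard]
  exact stabilizer_is_cws_general hHsub hH1 hHmul hHinv (Submodule.one_le_finrank_iff.mp hK)
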